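/- arXiv:2309.03850 — 2 statements merged into one kernel-verified Lean document; each statement's English description precedes it below -/
import Mathlib

section
/- Let v, w, v', w' ∈ V_+ with dist(v,w) = dist(v',w'). Then for all m, n ∈ ℕ the finite sets {u ∈ V_+ : dist(v,u) = m and dist(u,w) = n} and {u ∈ V_+ : dist(v',u) = m and dist(u,w') = n} have the same cardinality; in particular, #{u ∈ V_+ : dist(v,u) = m and dist(u,w) = n} = #{u ∈ V_+ : dist(v,u) = n and dist(u,w) = m}. -/
open scoped BigOperators ComplexOrder

/-- A semi-homogeneous tree `T_{q_+,q_-}`: a connected acyclic simple graph with a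
parity function `eps` (true = `+`, false = `−`) that flips across edges, in which every
vertex of parity `+` has exactly `qp + 1` neighbors and every vertex of parity `−` has
exactly `qm + 1` neighbors.  Spheres are finite (this follows from local finiteness
and connectedness, and is recorded as a field for convenience). -/
structure SemiHomTree (qp qm : ℕ) (V : Type) where
  G : SimpleGraph V
  connected : G.Connected
  acyclic : G.IsAcyclic
  eps : V → Bool
  adj_parity : ∀ ⦃v w : V⦄, G.Adj v w → eps w = !eps v
  nbr_finite : ∀ v : V, {w : V | G.Adj v w}.Finite
  degree_plus : ∀ v : V, eps v = true → {w : V | G.Adj v w}.ncard = qp + 1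
  degree_minus : ∀ v : V, eps v = false → {w : V | G.Adj v w}.ncard = qm + 1
  sphere_finite : ∀ (v : V) (n : ℕ), {w : V | G.dist v w = n}.Finite

/-- The averaging operator `M_n`: average of `f` over the sphere of radius `n` around `v`. -/
noncomputable def Mop {qp qm : ℕ} {V : Type} (T : SemiHomTree qp qm V)
    (n : ℕ) (f : V → ℂ) (v : V) : ℂ :=
  (({w : V | T.G.dist v w = n}.ncard : ℂ))⁻¹ * ∑ᶠ w ∈ {w : V | T.G.dist v w = n}, f w

/-- The Laplace operator `μ₁`: the average of `f` over the neighbors of `v`. -/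
noncomputable def lap {qp qm : ℕ} {V : Type} (T : SemiHomTree qp qm V)
    (f : V → ℂ) (v : V) : ℂ :=
  (((if T.eps v then qp else qm : ℕ) : ℂ) + 1)⁻¹ * ∑ᶠ w ∈ {w : V | T.G.Adj v w}, f w

namespace SemiHomTree

variable {qp qm : ℕ} {V : Type} (T : SemiHomTree qp qm V)

/-- Branching number at a vertex of the given parity. -/
def br (qp qm : ℕ) (b : Bool) : ℕ := if b then qp else qm

/-- Neighbors of a vertex. -/
noncomputable def nb (v : V) : Finset V := (T.nbr_finite v).toFinset

lemma mem_nb {v x : V} : x ∈ T.nb v ↔ T.G.Adj v x := by simp [nb]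

lemma card_nb (v : V) : (T.nb v).card = br qp qm (T.eps v) + 1 := by
  have h : (T.nb v).card = {w : V | T.G.Adj v w}.ncard :=
    (Set.ncard_eq_toFinset_card _ (T.nbr_finite v)).symm
  rw [h]
  cases hb : T.eps v
  · simpa [br] using T.degree_minus v hb
  · simpa [br] using T.degree_plus v hb

lemma dist_nb {v x : V} (u : V) (h : T.G.Adj v x) :
    T.G.dist v u = T.G.dist x u + 1 ∨ T.G.dist x u = T.G.dist v u + 1 := by
  have := T.acyclic.dist_eq_dist_add_one_of_adj_of_reachable u h (T.connected u v)
  rwa [T.G.dist_comm (u := u) (v := v), T.G.dist_comm (u := u) (v := x)] at this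

lemma exists_near {v u : V} (h : T.G.dist v u ≠ 0) :
    ∃ x, T.G.Adj v x ∧ T.G.dist v u = T.G.dist x u + 1 := by
  obtain ⟨p, hp⟩ := T.connected.exists_walk_length_eq_dist v u
  cases p with
  | nil => simp at h
  | @cons _ x _ ha p =>
    refine ⟨x, ha, ?_⟩
    have h1 := T.G.dist_le p
    have h2 := T.dist_nb u ha
    simp only [SimpleGraph.Walk.length_cons] at hp
    omega

lemma near_unique {v u x y : V} (hx : T.G.Adj v x) (hxd : T.G.dist v u = T.G.dist x u + 1)
    (hy : T.G.Adj v y) (hyd : T.G.dist v u = T.G.dist y u + 1) : x = y := by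
  obtain ⟨p, hp⟩ := T.connected.exists_walk_length_eq_dist x u
  obtain ⟨r, hr⟩ := T.connected.exists_walk_length_eq_dist y u
  have h1 : (SimpleGraph.Walk.cons hx p).IsPath :=
    SimpleGraph.Walk.isPath_of_length_eq_dist _ (by simp [hp, hxd])
  have h2 : (SimpleGraph.Walk.cons hy r).IsPath :=
    SimpleGraph.Walk.isPath_of_length_eq_dist _ (by simp [hr, hyd])
  have h3 := congrArg Subtype.val (T.acyclic.path_unique ⟨_, h1⟩ ⟨_, h2⟩)
  have h4 := congrArg SimpleGraph.Walk.snd h3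
  simpa using h4

lemma sum_nb (v u : V) (φ : ℕ → ℕ) :
    ∑ x ∈ T.nb v, φ (T.G.dist x u) =
      if T.G.dist v u = 0 then (br qp qm (T.eps v) + 1) * φ 1
      else φ (T.G.dist v u - 1) + br qp qm (T.eps v) * φ (T.G.dist v u + 1) := by
  classical
  split_ifs with h
  · rw [Finset.sum_congr rfl (g := fun _ => φ 1), Finset.sum_const, card_nb, smul_eq_mul]
    intro x hx
    have := T.dist_nb u (T.mem_nb.1 hx)
    congr 1
    omega
  · obtain ⟨x, hx, hxd⟩ := T.exists_near h
    have hm := T.mem_nb.2 hx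
    rw [← Finset.add_sum_erase _ _ hm]
    congr 1
    · congr 1
      omega
    · rw [Finset.sum_congr rfl (g := fun _ => φ (T.G.dist v u + 1)), Finset.sum_const,
        Finset.card_erase_of_mem hm, card_nb, smul_eq_mul, Nat.add_sub_cancel]
      intro y hy
      obtain ⟨hne, hy⟩ := Finset.mem_erase.1 hy
      rcases T.dist_nb u (T.mem_nb.1 hy) with h' | h'
      · exact absurd (T.near_unique (T.mem_nb.1 hy) h' hx hxd) hne
      · rw [h']

/-- Positive-parity vertices in the sphere around `w`. -/
noncomputable def sp (w : V) (n : ℕ) : Finset V :=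
  (T.sphere_finite w n).toFinset.filter fun u => T.eps u = true

lemma mem_sp {w u : V} {n : ℕ} : u ∈ T.sp w n ↔ T.G.dist u w = n ∧ T.eps u = true := by
  simp [sp, SimpleGraph.dist_comm]

/-- The intersection numbers. -/
noncomputable def cnt (v w : V) (m n : ℕ) : ℕ :=
  ∑ u ∈ T.sp w n, if T.G.dist v u = m then 1 else 0

lemma cnt_eq (v w : V) (m n : ℕ) :
    {u : V | T.eps u = true ∧ T.G.dist v u = m ∧ T.G.dist u w = n}.ncard = T.cnt v w m n := by
  rw [cnt, Finset.sum_boole, Nat.cast_id, ← Set.ncard_coe_finset]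
  congr 1
  ext u
  simp [mem_sp]
  tauto

lemma sum_cnt (v w : V) (m n : ℕ) :
    ∑ x ∈ T.nb v, T.cnt x w m n = ∑ u ∈ T.sp w n,
      if T.G.dist v u = 0 then (br qp qm (T.eps v) + 1) * (if 1 = m then 1 else 0)
      else (if T.G.dist v u - 1 = m then 1 else 0) +
        br qp qm (T.eps v) * (if T.G.dist v u + 1 = m then 1 else 0) := by
  unfold cnt
  rw [Finset.sum_comm]
  exact Finset.sum_congr rfl fun u _ => T.sum_nb v u fun k => if k = m then 1 else 0

lemma sum_cnt_zero (v w : V) (n : ℕ) : ∑ x ∈ T.nb v, T.cnt x w 0 n = T.cnt v w 1 n := by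
  rw [sum_cnt, cnt]
  refine Finset.sum_congr rfl fun u _ => ?_
  rcases hk : T.G.dist v u with _ | k <;> simp

lemma sum_cnt_succ (v w : V) (m n : ℕ) :
    ∑ x ∈ T.nb v, T.cnt x w (m + 1) n = T.cnt v w (m + 2) n +
      (br qp qm (T.eps v) + if m = 0 then 1 else 0) * T.cnt v w m n := by
  rw [sum_cnt, cnt, cnt, Finset.mul_sum, ← Finset.sum_add_distrib]
  refine Finset.sum_congr rfl fun u _ => ?_
  generalize T.G.dist v u = k
  rcases k with _ | k
  · rcases m with _ | m <;> simp
  · by_cases h : k + 1 = m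
    · subst h; simp; omega
    · simp [h]

/-- The statement that `cnt · · m ·` depends only on parity and distance. -/
def Dep (m : ℕ) : Prop := ∃ φ : Bool → ℕ → ℕ → ℕ, ∀ v w n,
  T.cnt v w m n = φ (T.eps v) (T.G.dist v w) n

lemma dep_zero : T.Dep 0 := by
  refine ⟨fun b d n => if d = n ∧ b = true then 1 else 0, fun v w n => ?_⟩
  classical
  have : ∀ u, T.G.dist v u = 0 ↔ v = u := fun u => T.connected.dist_eq_zero_iff
  simp only [cnt, this, Finset.sum_ite_eq, mem_sp]

lemma dep_sum {m : ℕ} (h : T.Dep m) : ∃ ψ : Bool → ℕ → ℕ → ℕ, ∀ v w n,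
    ∑ x ∈ T.nb v, T.cnt x w m n = ψ (T.eps v) (T.G.dist v w) n := by
  obtain ⟨φ, hφ⟩ := h
  refine ⟨fun b d n => if d = 0 then (br qp qm b + 1) * φ (!b) 1 n
      else φ (!b) (d - 1) n + br qp qm b * φ (!b) (d + 1) n, fun v w n => ?_⟩
  refine Eq.trans ?_ (T.sum_nb v w fun k => φ (!T.eps v) k n)
  refine Finset.sum_congr rfl fun x hx => ?_
  rw [hφ, T.adj_parity (T.mem_nb.1 hx)]

lemma dep (m : ℕ) : T.Dep m ∧ T.Dep (m + 1) := by
  induction m with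
  | zero =>
    refine ⟨T.dep_zero, ?_⟩
    obtain ⟨ψ, hψ⟩ := T.dep_sum T.dep_zero
    exact ⟨ψ, fun v w n => by rw [← hψ, sum_cnt_zero]⟩
  | succ m ih =>
    refine ⟨ih.2, ?_⟩
    obtain ⟨ψ, hψ⟩ := T.dep_sum ih.2
    obtain ⟨φ, hφ⟩ := ih.1
    refine ⟨fun b d n => ψ b d n - (br qp qm b + if m = 0 then 1 else 0) * φ b d n,
      fun v w n => ?_⟩
    simp only [← hψ, ← hφ, sum_cnt_succ]
    exact (Nat.add_sub_cancel ..).symm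

lemma cnt_congr {v w v' w' : V} (he : T.eps v = T.eps v')
    (hd : T.G.dist v w = T.G.dist v' w') (m n : ℕ) : T.cnt v w m n = T.cnt v' w' m n := by
  obtain ⟨φ, hφ⟩ := (T.dep m).1
  rw [hφ, hφ, he, hd]

end SemiHomTree

theorem stmt_12 {qp qm : ℕ} (hqp : 2 ≤ qp) (hqm : 2 ≤ qm) {V : Type}
    (T : SemiHomTree qp qm V) (v0 : V) (hv0 : T.eps v0 = true)
    (v w v' w' : V) (hv : T.eps v = true) (hw : T.eps w = true)
    (hv' : T.eps v' = true) (hw' : T.eps w' = true)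
    (hd : T.G.dist v w = T.G.dist v' w') :
    (∀ m n : ℕ,
      {u : V | T.eps u = true ∧ T.G.dist v u = m ∧ T.G.dist u w = n}.ncard =
        {u : V | T.eps u = true ∧ T.G.dist v' u = m ∧ T.G.dist u w' = n}.ncard) ∧
    (∀ m n : ℕ,
      {u : V | T.eps u = true ∧ T.G.dist v u = m ∧ T.G.dist u w = n}.ncard =
        {u : V | T.eps u = true ∧ T.G.dist v u = n ∧ T.G.dist u w = m}.ncard) := by
  refine ⟨fun m n => ?_, fun m n => ?_⟩
  · rw [T.cnt_eq, T.cnt_eq]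
    exact T.cnt_congr (hv.trans hv'.symm) hd m n
  · have h : {u : V | T.eps u = true ∧ T.G.dist v u = n ∧ T.G.dist u w = m} =
        {u : V | T.eps u = true ∧ T.G.dist w u = m ∧ T.G.dist u v = n} := by
      ext u
      simp only [Set.mem_ofPred_eq]
      rw [T.G.dist_comm (u := v) (v := u), T.G.dist_comm (u := w) (v := u)]
      tauto
    rw [h, T.cnt_eq, T.cnt_eq]
    exact T.cnt_congr (hv.trans hw.symm) T.G.dist_comm m n
end

section
/- Let φ : V_+ → ℂ be radial with profile F and not identically zero. Then the following are equivalent: (a) φ(v_0) = 1 and M_2 φ = F(2)·φ on V_+; (b) for all finitely supported F_1, G_1 : ℕ → ℂ, Σ_{v ∈ V_+} (F_1★G_1)(v)·φ(v) = (Σ_{v ∈ V_+} F_1(|v|)·φ(v))·(Σ_{v ∈ V_+} G_1(|v|)·φ(v)), where (F_1★G_1)(v) = Σ_{w ∈ V_+} F_1(dist(v,w))·G_1(|w|). -/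
open scoped BigOperators ComplexOrder

namespace SemiHomTree

variable {qp qm : ℕ} {V : Type} (T : SemiHomTree qp qm V)

/-- The sphere as a finset. -/
noncomputable def sph (n : ℕ) (v : V) : Finset V := (T.sphere_finite v n).toFinset

/-- Sum over a sphere. -/
noncomputable def S (n : ℕ) (f : V → ℂ) (v : V) : ℂ := ∑ w ∈ T.sph n v, f w

lemma mem_sph {n : ℕ} {v w : V} : w ∈ T.sph n v ↔ T.G.dist v w = n := by
  simp [sph]

lemma isTree : T.G.IsTree := ⟨T.connected, T.acyclic⟩

lemma walk_parity {v w : V} (p : T.G.Walk v w) : T.eps w = T.eps v ↔ Even p.length := by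
  induction p with
  | nil => simp
  | cons h p ih =>
    have := T.adj_parity h
    rw [SimpleGraph.Walk.length_cons, Nat.even_add_one, ← ih, this]
    generalize T.eps _ = a
    generalize T.eps _ = b
    cases a <;> cases b <;> simp

lemma parity (v w : V) : T.eps w = T.eps v ↔ Even (T.G.dist v w) := by
  obtain ⟨p, hp⟩ := T.connected.exists_walk_length_eq_dist v w
  rw [← hp]
  exact T.walk_parity p

/-- Degree. -/
def q (v : V) : ℕ := if T.eps v then qp else qm

lemma card_sph_one (v : V) : (T.sph 1 v).card = T.q v + 1 := by
  have h : (T.sph 1 v).card = {w : V | T.G.Adj v w}.ncard := by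
    rw [← Set.ncard_coe_finset]
    congr 1
    ext w
    simp [mem_sph]
  rw [h, q]
  by_cases hv : T.eps v = true
  · simp [hv, T.degree_plus v hv]
  · have hv' : T.eps v = false := by simpa using hv
    simp [hv', T.degree_minus v hv']

lemma sph_zero (v : V) : T.sph 0 v = {v} := by
  ext w
  rw [mem_sph, T.connected.dist_eq_zero_iff, Finset.mem_singleton, eq_comm]

lemma S_zero (f : V → ℂ) (v : V) : T.S 0 f v = f v := by
  simp [S, sph_zero]

/-- Exactly one neighbour is closer. -/
lemma exists_parent (v w : V) (h : w ≠ v) : ∃ u ∈ T.sph 1 w,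
    T.G.dist v w = T.G.dist v u + 1 ∧
    ∀ u' ∈ T.sph 1 w, u' ≠ u → T.G.dist v u' = T.G.dist v w + 1 := by
  obtain ⟨p, hp, hl⟩ := T.connected.exists_path_of_dist w v
  cases p with
  | nil => exact absurd rfl h
  | @cons _ u _ ha p =>
    have hlen : p.length + 1 = T.G.dist w v := by simpa using hl
    have h1 : T.G.dist u v ≤ p.length := SimpleGraph.dist_le p
    have key := T.isTree.dist_eq_dist_add_one_of_adj v ha
    rw [SimpleGraph.dist_comm (u := w), SimpleGraph.dist_comm (u := u)] at *
    refine ⟨u, by simpa [mem_sph] using ha, by omega, ?_⟩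
    intro u' hu' hne
    have ha' : T.G.Adj w u' := by simpa [mem_sph] using hu'
    have key' := T.isTree.dist_eq_dist_add_one_of_adj v ha'
    rcases key' with k | k
    · exfalso
      obtain ⟨p', hp'⟩ := T.connected.exists_walk_length_eq_dist u' v
      have hP : (SimpleGraph.Walk.cons ha' p').IsPath := by
        apply SimpleGraph.Walk.isPath_of_length_eq_dist
        rw [SimpleGraph.Walk.length_cons, hp', SimpleGraph.dist_comm, SimpleGraph.dist_comm (u := w)]
        omega
      have := T.acyclic.path_unique (⟨_, hP⟩ : T.G.Path w v) ⟨_, hp⟩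
      have h2 := congrArg (fun r : T.G.Path w v => (r : T.G.Walk w v).snd) this
      simp at h2
      exact hne h2
    · omega

lemma nbr_sum (v w : V) (h : w ≠ v) (H : ℕ → ℂ) :
    ∑ u ∈ T.sph 1 w, H (T.G.dist v u) =
      H (T.G.dist v w - 1) + T.q w * H (T.G.dist v w + 1) := by
  classical
  obtain ⟨u, hu, h1, h2⟩ := T.exists_parent v w h
  rw [← Finset.add_sum_erase _ _ hu, h1, Nat.add_sub_cancel]
  congr 1
  rw [Finset.sum_congr rfl (g := fun _ => H (T.G.dist v u + 1 + 1))]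
  · rw [Finset.sum_const, Finset.card_erase_of_mem hu, card_sph_one, nsmul_eq_mul]
    simp
  · intro x hx
    rw [Finset.mem_erase] at hx
    rw [h2 x hx.2 hx.1, h1]

lemma S_one_S (n : ℕ) (hn : 1 ≤ n) (f : V → ℂ) (w : V) :
    T.S 1 (T.S n f) w = T.S (n + 1) f w +
      (if n = 1 then (T.q w : ℂ) + 1 else T.q w) * T.S (n - 1) f w := by
  classical
  have hd : Disjoint (T.sph (n + 1) w) (T.sph (n - 1) w) := by
    rw [Finset.disjoint_left]
    intro x hx hx'
    rw [mem_sph] at hx hx'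
    omega
  unfold S
  rw [Finset.sum_comm' (t' := T.sph (n + 1) w ∪ T.sph (n - 1) w)
    (s' := fun v => (T.sph 1 w).filter (fun u => T.G.dist v u = n)), Finset.sum_union hd]
  · have hc : ∀ v, (∑ _u ∈ (T.sph 1 w).filter (fun u => T.G.dist v u = n), f v) =
        (∑ u ∈ T.sph 1 w, (fun k => if k = n then (1 : ℂ) else 0) (T.G.dist v u)) * f v := by
      intro v
      simp [Finset.sum_const, nsmul_eq_mul, Finset.sum_ite]
    simp only [hc]
    congr 1
    · refine Finset.sum_congr rfl fun v hv => ?_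
      rw [mem_sph] at hv
      have hne : w ≠ v := by
        rintro rfl
        simp at hv
      rw [T.nbr_sum v w hne (fun k => if k = n then (1 : ℂ) else 0), SimpleGraph.dist_comm, hv]
      have e2 : n + 1 + 1 ≠ n := by omega
      simp [e2]
    · rw [Finset.mul_sum]
      refine Finset.sum_congr rfl fun v hv => ?_
      rw [mem_sph] at hv
      by_cases h1 : n = 1
      · subst h1
        have : w = v := by
          rw [← T.connected.dist_eq_zero_iff]; simpa using hv
        subst this
        rw [if_pos rfl]
        congr 1
        rw [Finset.sum_congr rfl (g := fun _ => (1 : ℂ))]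
        · simp [card_sph_one]
        · intro x hx
          rw [mem_sph] at hx
          simp [hx]
      · have hne : w ≠ v := by
          rintro rfl
          simp at hv
          omega
        rw [T.nbr_sum v w hne (fun k => if k = n then (1 : ℂ) else 0), SimpleGraph.dist_comm, hv, if_neg h1]
        have e1 : n - 1 + 1 = n := by omega
        have e2 : n - 1 - 1 ≠ n := by omega
        simp [e1, e2]
  · intro u v
    rw [Finset.mem_filter, Finset.mem_union, mem_sph, mem_sph, mem_sph, mem_sph]
    constructor
    · rintro ⟨h1, h2⟩
      refine ⟨⟨h1, by rw [SimpleGraph.dist_comm]; exact h2⟩, ?_⟩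
      have := T.isTree.dist_eq_dist_add_one_of_adj v (SimpleGraph.dist_eq_one_iff_adj.1 h1)
      rw [SimpleGraph.dist_comm (v := w), SimpleGraph.dist_comm (v := u)] at this
      omega
    · rintro ⟨⟨h1, h2⟩, -⟩
      exact ⟨h1, by rw [SimpleGraph.dist_comm]; exact h2⟩

lemma eps_nbr {u w : V} (h : u ∈ T.sph 1 w) : T.eps u = !T.eps w :=
  T.adj_parity (by simpa [mem_sph] using h)

lemma q_plus {v : V} (h : T.eps v = true) : T.q v = qp := by simp [q, h]
lemma q_minus {v : V} (h : T.eps v = false) : T.q v = qm := by simp [q, h]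

lemma S_congr (n : ℕ) (f g : V → ℂ) (w : V) (h : ∀ u ∈ T.sph n w, f u = g u) :
    T.S n f w = T.S n g w := Finset.sum_congr rfl h

lemma S_const_mul (n : ℕ) (c : ℂ) (f : V → ℂ) (w : V) :
    T.S n (fun u => c * f u) w = c * T.S n f w := by simp [S, Finset.mul_sum]

lemma S_two (f : V → ℂ) (w : V) :
    T.S 2 f w = T.S 1 (T.S 1 f) w - (T.q w + 1) * f w := by
  rw [T.S_one_S 1 le_rfl]
  simp [S_zero]

lemma card_sph_two (w : V) (hw : T.eps w = true) :
    ((T.sph 2 w).card : ℂ) = (qp + 1) * qm := by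
  have h := T.S_two (fun _ => 1) w
  have h1 : T.S 1 (T.S 1 (fun _ => 1)) w = T.S 1 (fun _ => (qm + 1 : ℂ) * 1) w := by
    refine T.S_congr _ _ _ _ fun u hu => ?_
    have : T.eps u = false := by rw [T.eps_nbr hu, hw]; rfl
    simp [S, card_sph_one, T.q_minus this]
  rw [h1] at h
  simp only [S, Finset.sum_const, card_sph_one, nsmul_eq_mul, T.q_plus hw] at h
  push_cast at h
  linear_combination h

lemma radial_S_one (v0 : V) (hv0 : T.eps v0 = true) (f : V → ℂ) (H : ℕ → ℂ)
    (hf : ∀ v, f v = H (T.G.dist v0 v)) :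
    ∃ H' : ℕ → ℂ, ∀ v, T.S 1 f v = H' (T.G.dist v0 v) := by
  refine ⟨fun k => if k = 0 then (qp + 1) * H 1 else
    H (k - 1) + (if Even k then qp else qm : ℕ) * H (k + 1), fun v => ?_⟩
  have e : T.S 1 f v = ∑ u ∈ T.sph 1 v, H (T.G.dist v0 u) :=
    Finset.sum_congr rfl fun u _ => hf u
  rw [e]
  by_cases h : v = v0
  · subst h
    rw [Finset.sum_congr rfl (g := fun _ => H 1)]
    · simp [card_sph_one, T.q_plus hv0]
    · intro x hx
      rw [mem_sph] at hx
      rw [hx]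
  · have hne : T.G.dist v0 v ≠ 0 := by
      rw [Ne, T.connected.dist_eq_zero_iff]
      exact fun h' => h h'.symm
    rw [T.nbr_sum v0 v h]
    simp only [hne, if_false]
    have hp := T.parity v0 v
    rw [hv0] at hp
    simp only [q, hp]

lemma eigen (f : V → ℂ) (κ : ℂ)
    (hκ : ∀ w, T.eps w = true → T.S 1 (T.S 1 f) w = κ * f w) (n : ℕ) :
    (∃ c, ∀ w, T.eps w = true → T.S (2 * n) f w = c * f w) ∧
    (∃ d, ∀ u, T.eps u = false → T.S (2 * n + 1) f u = d * T.S 1 f u) := by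
  induction n with
  | zero => exact ⟨⟨1, fun w _ => by simp [S_zero]⟩, ⟨1, fun u _ => by simp⟩⟩
  | succ n ih =>
    obtain ⟨⟨c, hc⟩, ⟨d, hd⟩⟩ := ih
    have A : ∃ c', ∀ w, T.eps w = true → T.S (2 * (n + 1)) f w = c' * f w := by
      refine ⟨d * κ - (if 2 * n + 1 = 1 then (qp : ℂ) + 1 else qp) * c, fun w hw => ?_⟩
      have h := T.S_one_S (2 * n + 1) (by omega) f w
      rw [T.S_congr 1 _ (fun u => d * T.S 1 f u) w, S_const_mul, hκ w hw, Nat.add_sub_cancel,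
        hc w hw, T.q_plus hw] at h
      · rw [show 2 * (n + 1) = 2 * n + 1 + 1 by ring]
        linear_combination -h
      · intro u hu
        exact hd u (by rw [T.eps_nbr hu, hw]; rfl)
    refine ⟨A, ?_⟩
    obtain ⟨c', hc'⟩ := A
    refine ⟨c' - qm * d, fun u hu => ?_⟩
    have h := T.S_one_S (2 * (n + 1)) (by omega) f u
    rw [T.S_congr 1 _ (fun u => c' * f u) u, S_const_mul, if_neg (by omega),
      show 2 * (n + 1) - 1 = 2 * n + 1 by omega, hd u hu, T.q_minus hu] at h
    · linear_combination -h
    · intro w hw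
      exact hc' w (by rw [T.eps_nbr hw, hu]; rfl)

lemma finite_ball (s : Finset ℕ) (w : V) : {v | T.G.dist w v ∈ s}.Finite := by
  refine (s.finite_toSet.biUnion (fun n _ => T.sphere_finite w n)).subset fun v hv => ?_
  simpa using hv

lemma supp_finite (g : ℕ → ℂ) (s : Finset ℕ) (hs : ∀ n, n ∉ s → g n = 0) (f : V → ℂ) (w : V) :
    (Function.support fun v => g (T.G.dist w v) * f v).Finite := by
  refine (T.finite_ball s w).subset fun v hv => ?_
  by_contra h
  exact hv (by simp [hs _ h])

lemma finsum_radial (g : ℕ → ℂ) (s : Finset ℕ) (hs : ∀ n, n ∉ s → g n = 0)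
    (f : V → ℂ) (w : V) :
    ∑ᶠ v, g (T.G.dist w v) * f v = ∑ n ∈ s, g n * T.S n f w := by
  classical
  rw [finsum_eq_sum_of_support_subset (s := (T.finite_ball s w).toFinset)]
  · rw [← Finset.sum_fiberwise_of_maps_to (t := s) (g := fun v => T.G.dist w v)]
    · refine Finset.sum_congr rfl fun n hn => ?_
      rw [S, Finset.mul_sum]
      refine Finset.sum_congr ?_ ?_
      · ext v
        simp only [Finset.mem_filter, Set.Finite.mem_toFinset, Set.mem_setOf_eq, mem_sph]
        exact ⟨fun h => h.2, fun h => ⟨h ▸ hn, h⟩⟩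
      · intro v hv
        rw [mem_sph] at hv
        rw [hv]
    · intro v hv
      simpa using hv
  · intro v hv
    simp only [Set.Finite.coe_toFinset, Set.mem_setOf_eq]
    by_contra h
    exact hv (by simp [hs _ h])

lemma finsum_plus (X φ f : V → ℂ) (hf : ∀ v, f v = if T.eps v = true then φ v else 0) :
    ∑ᶠ v ∈ {v : V | T.eps v = true}, X v * φ v = ∑ᶠ v, X v * f v := by
  rw [finsum_mem_def]
  refine finsum_congr fun v => ?_
  by_cases h : T.eps v = true <;> simp [Set.indicator, hf, h]

lemma conv_formula (v0 : V) (φ f : V → ℂ) (hf : ∀ v, f v = if T.eps v = true then φ v else 0)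
    (F1 G1 : ℕ → ℂ) (s t : Finset ℕ) (hs : ∀ n, n ∉ s → F1 n = 0) (ht : ∀ n, n ∉ t → G1 n = 0) :
    (∑ᶠ v ∈ {v : V | T.eps v = true},
      (∑ᶠ w ∈ {w : V | T.eps w = true}, F1 (T.G.dist v w) * G1 (T.G.dist v0 w)) * φ v) =
    ∑ n ∈ t, G1 n * T.S n
      (fun w => if T.eps w = true then ∑ m ∈ s, F1 m * T.S m f w else 0) v0 := by
  rw [T.finsum_plus _ φ f hf]
  have inner : ∀ v, (∑ᶠ w ∈ {w : V | T.eps w = true}, F1 (T.G.dist v w) * G1 (T.G.dist v0 w)) * f v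
      = ∑ n ∈ t, ∑ w ∈ T.sph n v0, F1 (T.G.dist w v) * ((G1 n * if T.eps w = true then 1 else 0) * f v) := by
    intro v
    have := T.finsum_radial G1 t ht
      (fun w => if T.eps w = true then F1 (T.G.dist v w) else 0) v0
    rw [← T.finsum_plus _ (fun w => F1 (T.G.dist v w)) _ (fun _ => rfl)] at this
    simp only [mul_comm (F1 _) (G1 _)]
    rw [this, Finset.sum_mul]
    refine Finset.sum_congr rfl fun n _ => ?_
    rw [S, Finset.mul_sum, Finset.sum_mul]
    refine Finset.sum_congr rfl fun w _ => ?_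
    rw [SimpleGraph.dist_comm]
    split_ifs <;> ring
  rw [finsum_congr inner, finsum_sum_comm]
  · refine Finset.sum_congr rfl fun n _ => ?_
    rw [finsum_sum_comm]
    · rw [S, Finset.mul_sum]
      refine Finset.sum_congr rfl fun w _ => ?_
      rw [T.finsum_radial F1 s hs]
      simp only [S_const_mul]
      split_ifs
      · rw [Finset.mul_sum]
        refine Finset.sum_congr rfl fun m _ => ?_
        ring
      · simp
    · intro w _
      exact T.supp_finite F1 s hs _ w
  · intro n _
    have : (⋃ w ∈ T.sph n v0, Function.support fun v => F1 (T.G.dist w v) *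
        ((G1 n * if T.eps w = true then 1 else 0) * f v)).Finite :=
      (T.sph n v0).finite_toSet.biUnion fun w _ => T.supp_finite F1 s hs _ w
    refine this.subset fun v hv => ?_
    obtain ⟨w, hw, h⟩ := Finset.exists_ne_zero_of_sum_ne_zero hv
    simp only [Set.mem_iUnion]
    exact ⟨w, hw, h⟩

lemma Mop_two (φ f : V → ℂ) (hf : ∀ v, f v = if T.eps v = true then φ v else 0)
    (w : V) (hw : T.eps w = true) :
    Mop T 2 φ w = ((qp + 1) * qm : ℂ)⁻¹ * T.S 2 f w := by
  rw [Mop, ← T.card_sph_two w hw, Set.ncard_eq_toFinset_card _ (T.sphere_finite w 2),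
    finsum_mem_eq_finite_toFinset_sum _ (T.sphere_finite w 2)]
  congr 1
  refine Finset.sum_congr rfl fun v hv => ?_
  have h2 : T.G.dist w v = 2 := T.mem_sph.1 hv
  have := (T.parity w v).2 (by rw [h2]; decide)
  rw [hf, if_pos (this.trans hw)]

end SemiHomTree

theorem stmt_15 {qp qm : ℕ} (hqp : 2 ≤ qp) (hqm : 2 ≤ qm) {V : Type}
    (T : SemiHomTree qp qm V) (v0 : V) (hv0 : T.eps v0 = true)
    (φ : V → ℂ) (F : ℕ → ℂ)
    (hrad : ∀ v : V, T.eps v = true → φ v = F (T.G.dist v0 v))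
    (hne : ∃ v : V, T.eps v = true ∧ φ v ≠ 0) :
    (φ v0 = 1 ∧ ∀ v : V, T.eps v = true → Mop T 2 φ v = F 2 * φ v) ↔
      (∀ F1 G1 : ℕ → ℂ,
        (Function.support F1).Finite → (Function.support G1).Finite →
        (∑ᶠ v ∈ {v : V | T.eps v = true},
          (∑ᶠ w ∈ {w : V | T.eps w = true}, F1 (T.G.dist v w) * G1 (T.G.dist v0 w)) * φ v) =
        (∑ᶠ v ∈ {v : V | T.eps v = true}, F1 (T.G.dist v0 v) * φ v) *
          (∑ᶠ v ∈ {v : V | T.eps v = true}, G1 (T.G.dist v0 v) * φ v)) := by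
  classical
  set f : V → ℂ := fun v => if T.eps v = true then φ v else 0 with hfdef
  have hf : ∀ v, f v = if T.eps v = true then φ v else 0 := fun _ => rfl
  have hfp : ∀ v, T.eps v = true → f v = φ v := fun v hv => by rw [hf, if_pos hv]
  have hN : ((qp + 1) * qm : ℂ) ≠ 0 := by
    have : (qm : ℂ) ≠ 0 := by exact_mod_cast (by omega : qm ≠ 0)
    exact mul_ne_zero (by exact_mod_cast Nat.succ_ne_zero qp) this
  have hfr : ∀ v, f v = (fun k => if Even k then F k else 0) (T.G.dist v0 v) := by
    intro v
    have hp := T.parity v0 v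
    rw [hv0] at hp
    simp only [hf, hp]
    split_ifs with h
    · exact hrad v (hp.2 h)
    · rfl
  have hS : ∀ n, T.S n f v0 = (T.sph n v0).card * (if Even n then F n else 0) := by
    intro n
    rw [SemiHomTree.S, Finset.sum_congr rfl (g := fun _ => if Even n then F n else 0)]
    · simp
    · intro x hx
      rw [hfr, T.mem_sph.1 hx]
  constructor
  · rintro ⟨h1, hM⟩ F1 G1 hF hG
    have hκ : ∀ w, T.eps w = true → T.S 1 (T.S 1 f) w =
        ((qp + 1) * qm * F 2 + (qp + 1)) * f w := by
      intro w hw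
      have h := hM w hw
      rw [T.Mop_two φ f hf w hw, inv_mul_eq_iff_eq_mul₀ hN, T.S_two, T.q_plus hw, ← hfp w hw] at h
      linear_combination h
    have hE : ∀ m w, T.eps w = true → T.S m f w = T.S m f v0 * f w := by
      intro m w hw
      rcases Nat.even_or_odd m with he | ho
      · obtain ⟨k, rfl⟩ := he.two_dvd
        obtain ⟨c, hc⟩ := (T.eigen f _ hκ k).1
        rw [hc w hw, hc v0 hv0, hfp v0 hv0, h1, mul_one]
      · have hz : ∀ w, T.eps w = true → T.S m f w = 0 := by
          intro w hw
          refine Finset.sum_eq_zero fun v hv => ?_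
          have hp := T.parity w v
          rw [T.mem_sph.1 hv, hw] at hp
          rw [hf, if_neg]
          rw [hp]
          exact Nat.not_even_iff_odd.2 ho
        rw [hz w hw, hz v0 hv0, zero_mul]
    have hs : ∀ n, n ∉ hF.toFinset → F1 n = 0 := by simp
    have ht : ∀ n, n ∉ hG.toFinset → G1 n = 0 := by simp
    rw [T.conv_formula v0 φ f hf F1 G1 _ _ hs ht, T.finsum_plus _ φ f hf, T.finsum_plus _ φ f hf,
      T.finsum_radial F1 _ hs, T.finsum_radial G1 _ ht, Finset.mul_sum]
    refine Finset.sum_congr rfl fun n _ => ?_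
    rw [T.S_congr n _ (fun w => (∑ m ∈ hF.toFinset, F1 m * T.S m f v0) * f w), T.S_const_mul]
    · ring
    · intro w _
      by_cases hw : T.eps w = true
      · rw [if_pos hw, Finset.sum_mul]
        refine Finset.sum_congr rfl fun m _ => ?_
        rw [hE m w hw]
        ring
      · simp [hf, hw]
  · intro hb
    have key : ∀ a b : ℕ, T.S b (fun w => if T.eps w = true then T.S a f w else 0) v0 =
        T.S a f v0 * T.S b f v0 := by
      intro a b
      have hs : ∀ c n : ℕ, n ∉ ({c} : Finset ℕ) → (Pi.single c (1 : ℂ) : ℕ → ℂ) n = 0 := by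
        intro c n hn
        rw [Pi.single_eq_of_ne]
        simpa using hn
      have hfin : ∀ c : ℕ, (Function.support (Pi.single c (1 : ℂ) : ℕ → ℂ)).Finite := by
        intro c
        refine (Set.finite_singleton c).subset fun n hn => ?_
        by_contra h
        exact hn (hs c n (by simpa using h))
      have h := hb (Pi.single a 1) (Pi.single b 1) (hfin a) (hfin b)
      rw [T.conv_formula v0 φ f hf _ _ _ _ (hs a) (hs b), T.finsum_plus _ φ f hf,
        T.finsum_plus _ φ f hf, T.finsum_radial _ _ (hs a), T.finsum_radial _ _ (hs b)] at h
      simpa using h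
    obtain ⟨x, hx, hx0⟩ := hne
    have hcard : ∀ v, ((T.sph (T.G.dist v0 v) v0).card : ℂ) ≠ 0 := by
      intro v
      have : (T.sph (T.G.dist v0 v) v0).card ≠ 0 :=
        Finset.card_ne_zero_of_mem (a := v) (T.mem_sph.2 rfl)
      exact_mod_cast this
    have hSv : ∀ v, T.S (T.G.dist v0 v) f v0 = (T.sph (T.G.dist v0 v) v0).card * f v := by
      intro v
      rw [hS, hfr]
    have h1 : φ v0 = 1 := by
      have h := key 0 (T.G.dist v0 x)
      rw [T.S_congr _ _ f] at h
      · rw [T.S_zero, hSv, hfp v0 hv0, hfp x hx] at h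
        exact mul_right_cancel₀ (mul_ne_zero (hcard x) hx0) (by rw [one_mul]; exact h.symm)
      · intro u _
        by_cases hu : T.eps u = true <;> simp [T.S_zero, hf, hu]
    refine ⟨h1, fun v hv => ?_⟩
    rw [T.Mop_two φ f hf v hv, inv_mul_eq_iff_eq_mul₀ hN]
    obtain ⟨H1, hH1⟩ := T.radial_S_one v0 hv0 f (fun k => if Even k then F k else 0) hfr
    obtain ⟨H2, hH2⟩ := T.radial_S_one v0 hv0 _ H1 hH1
    have h := key 2 (T.G.dist v0 v)
    rw [T.S_congr _ _ (fun _ => T.S 2 f v)] at h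
    · rw [hSv, hS 2, T.card_sph_two v0 hv0, if_pos (by decide), hfp v hv] at h
      rw [SemiHomTree.S, Finset.sum_const, nsmul_eq_mul] at h
      apply mul_left_cancel₀ (hcard v)
      rw [h]
      ring
    · intro u hu
      rw [T.mem_sph] at hu
      have hu' : T.eps u = true := by
        have h3 := T.parity v0 u
        have h4 := T.parity v0 v
        rw [hu, ← h4, hv0] at h3
        exact h3.2 hv
      rw [if_pos hu', T.S_two, T.S_two, hH2, hH2, hfr u, hfr v, hu, T.q_plus hu', T.q_plus hv]
end
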